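/- For every complex number q with |q| < 1, with x(q) = (q; q^2)_∞ / (q^3; q^6)_∞^3, one has the 2-dissection 1/x(q)^2 = ( q^2 (q^2; q^2)_∞^2 (q^{12}; q^{12})_∞^6 / ((q^4; q^4)_∞^2 (q^6; q^6)_∞^6) + (q^4; q^4)_∞^6 / ((q^2; q^2)_∞^2 (q^6; q^6)_∞^2 (q^{12}; q^{12})_∞^2) ) + 2 q (q^4; q^4)_∞^2 (q^{12}; q^{12})_∞^2 / (q^6; q^6)_∞^4. -/

import Mathlib

/-- The q-shifted factorial `(a; q)_∞ = ∏_{n=0}^∞ (1 - a qⁿ)`. -/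
noncomputable def qPoch (a q : ℂ) : ℂ := ∏' n : ℕ, (1 - a * q ^ n)

/-- `x(q) = (q; q²)_∞ / (q³; q⁶)_∞³`. -/
noncomputable def x (q : ℂ) : ℂ := qPoch q (q ^ 2) / qPoch (q ^ 3) (q ^ 6) ^ 3

/-!
The reciprocal `1 / x q` itself has a 2-dissection `A + q B` with `A` and `B` even in `q`; its
square is the claim. Put `θ(z; p) = (z; p)_∞ (p / z; p)_∞`. With every product written in terms of
`θ(qᵏ; q¹²)`, the dissection of `1 / x q` is the instance `(a, b, c, d) = (q⁴, q², q³, 1)` of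
Weierstrass' three-term relation.

That relation is a Plücker relation. By the Jacobi triple product, `θ(ab; p) θ(a/b; p)` is a double
series over `ℤ²`; splitting it by the parity of the sum of the indices turns it, up to a constant,
into a `2 × 2` determinant of the shape `F(a) G(b) - (a / b) G(a) F(b)`. The triple product is the
limit of its finite form, whose coefficients are Gaussian binomials.
-/

open Filter Topology

lemma norm_pow_lt_one {R : Type*} [SeminormedRing R] {a : R} (ha : ‖a‖ < 1) {n : ℕ} (hn : n ≠ 0) :
    ‖a ^ n‖ < 1 :=
  (norm_pow_le' a (Nat.pos_of_ne_zero hn)).trans_lt (pow_lt_one₀ (norm_nonneg a) ha hn)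

lemma sq_zpow {G : Type*} [DivisionMonoid G] (a : G) (m : ℤ) : (a ^ 2) ^ m = a ^ (2 * m) := by
  rw [zpow_mul, zpow_ofNat]

section QPochhammer

variable {p : ℂ}

lemma summable_norm_mul_pow (a : ℂ) (hp : ‖p‖ < 1) : Summable fun n : ℕ ↦ ‖-(a * p ^ n)‖ := by
  simpa only [norm_neg, norm_mul, norm_pow] using
    (summable_geometric_of_lt_one (norm_nonneg p) hp).mul_left ‖a‖

lemma multipliable_one_sub_mul_pow (a : ℂ) (hp : ‖p‖ < 1) :
    Multipliable fun n : ℕ ↦ 1 - a * p ^ n := by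
  simpa only [sub_eq_add_neg] using multipliable_one_add_of_summable (summable_norm_mul_pow a hp)

lemma tendsto_prod_range_qPoch (a : ℂ) (hp : ‖p‖ < 1) :
    Tendsto (fun N : ℕ ↦ ∏ n ∈ Finset.range N, (1 - a * p ^ n)) atTop (𝓝 (qPoch a p)) :=
  (multipliable_one_sub_mul_pow a hp).tendsto_prod_tprod_nat

lemma qPoch_ne_zero {a : ℂ} (ha : ‖a‖ < 1) (hp : ‖p‖ < 1) : qPoch a p ≠ 0 := by
  have hfactor (n : ℕ) : 1 - a * p ^ n ≠ 0 := by
    refine (isUnit_one_sub_of_norm_lt_one ?_).ne_zero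
    rw [norm_mul, norm_pow]
    exact mul_lt_one_of_nonneg_of_lt_one_left (norm_nonneg a) ha (pow_le_one₀ (norm_nonneg p) hp.le)
  simp only [qPoch, sub_eq_add_neg] at hfactor ⊢
  exact tprod_one_add_ne_zero_of_summable hfactor (summable_norm_mul_pow a hp)

lemma qPoch_pow_self_ne_zero (hp : ‖p‖ < 1) {n : ℕ} (hn : n ≠ 0) : qPoch (p ^ n) (p ^ n) ≠ 0 :=
  qPoch_ne_zero (norm_pow_lt_one hp hn) (norm_pow_lt_one hp hn)

lemma qPoch_eq_one_sub_mul (a : ℂ) (hp : ‖p‖ < 1) : qPoch a p = (1 - a) * qPoch (a * p) p := by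
  have hshift : Multipliable fun n : ℕ ↦ 1 - a * p ^ (n + 1) := by
    simpa only [pow_succ', ← mul_assoc] using multipliable_one_sub_mul_pow (a * p) hp
  simpa only [qPoch, pow_zero, mul_one, pow_succ', ← mul_assoc] using
    tprod_eq_zero_mul' (f := fun n : ℕ ↦ 1 - a * p ^ n) hshift

lemma qPoch_zpow_of_nonpos (hp : p ≠ 0) {m : ℤ} (hm : m ≤ 0) : qPoch (p ^ m) p = 0 := by
  refine tprod_of_exists_eq_zero ⟨m.natAbs, ?_⟩
  have hcancel : m + m.natAbs = 0 := by lia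
  rw [← zpow_natCast, ← zpow_add₀ hp, hcancel, zpow_zero, sub_self]

lemma qPoch_eq_prod_qPoch_pow {m : ℕ} (hm : m ≠ 0) (a : ℂ) (hp : ‖p‖ < 1) :
    qPoch a p = ∏ i ∈ Finset.range m, qPoch (a * p ^ i) (p ^ m) := by
  have hpm : ‖p ^ m‖ < 1 := norm_pow_lt_one hp hm
  have hmul : Tendsto (fun N : ℕ ↦ m * N) atTop atTop :=
    tendsto_id.const_mul_atTop' (Nat.pos_of_ne_zero hm)
  refine tendsto_nhds_unique ((tendsto_prod_range_qPoch a hp).comp hmul)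
    ((tendsto_finsetProd (Finset.range m)
      fun i _ ↦ tendsto_prod_range_qPoch (a * p ^ i) hpm).congr fun N ↦ ?_)
  rw [Function.comp_apply, Finset.prod_comm]
  induction N with
  | zero => simp
  | succ N ih =>
    rw [Finset.prod_range_succ, ih, Nat.mul_succ, Finset.prod_range_add]
    congr! 3
    ring

lemma norm_qPoch_sub_one_le (a : ℂ) (hp : ‖p‖ < 1) :
    ‖qPoch a p - 1‖ ≤ Real.exp (‖a‖ / (1 - ‖p‖)) - 1 := by
  refine le_of_tendsto ((tendsto_prod_range_qPoch a hp).sub_const 1).norm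
    (Eventually.of_forall fun N ↦ ?_)
  have hgeom : ∑ n ∈ Finset.range N, ‖-(a * p ^ n)‖ ≤ ‖a‖ / (1 - ‖p‖) := by
    have hsum := (hasSum_geometric_of_lt_one (norm_nonneg p) hp).mul_left ‖a‖
    simpa only [norm_neg, norm_mul, norm_pow, div_eq_mul_inv] using
      sum_le_hasSum (Finset.range N) (fun n _ ↦ by positivity) hsum
  simp only [sub_eq_add_neg (1 : ℂ)]
  exact (Finset.norm_prod_one_add_sub_one_le _ _).trans (by gcongr)

lemma tendsto_qPoch_zero (hp : ‖p‖ < 1) : Tendsto (qPoch · p) (𝓝 0) (𝓝 1) := by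
  refine tendsto_sub_nhds_zero_iff.1
    (squeeze_zero_norm (fun a ↦ norm_qPoch_sub_one_le a hp) ?_)
  have hcont : Continuous fun a : ℂ ↦ Real.exp (‖a‖ / (1 - ‖p‖)) - 1 := by fun_prop
  simpa using hcont.tendsto 0

lemma norm_qPoch_zpow_le (hp0 : p ≠ 0) (hp1 : ‖p‖ < 1) (m : ℤ) :
    ‖qPoch (p ^ m) p‖ ≤ Real.exp (1 / (1 - ‖p‖)) := by
  rcases le_or_gt m 0 with hm | hm
  · rw [qPoch_zpow_of_nonpos hp0 hm, norm_zero]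
    positivity
  have hpm : ‖p ^ m‖ ≤ 1 := by
    rw [norm_zpow]
    exact zpow_le_one₀ (norm_pos_iff.2 hp0) hp1.le hm.le
  have hdist := norm_qPoch_sub_one_le (p ^ m) hp1
  have hexp : Real.exp (‖p ^ m‖ / (1 - ‖p‖)) ≤ Real.exp (1 / (1 - ‖p‖)) := by
    gcongr
  have htri := norm_le_norm_sub_add (qPoch (p ^ m) p) 1
  rw [norm_one] at htri
  linarith

end QPochhammer

section GaussianCoefficients

variable {p : ℂ}

/-- A Gaussian binomial coefficient with its denominators cleared:
`(p; p)_∞ (p^(2n+1); p)_∞` times the coefficient of `2n` over `n + k`. It is a product of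
`q`-shifted factorials for every integer `k`, and vanishes for `|k| > n`. -/
noncomputable def gaussCoeff (p : ℂ) (n : ℕ) (k : ℤ) : ℂ :=
  qPoch (p ^ (n + 1 - k)) p * qPoch (p ^ (n + 1 + k)) p

lemma gaussCoeff_zero_of_ne_zero (hp : p ≠ 0) {k : ℤ} (hk : k ≠ 0) : gaussCoeff p 0 k = 0 := by
  rcases lt_or_gt_of_ne hk with hneg | hpos
  · exact mul_eq_zero_of_right _ (qPoch_zpow_of_nonpos hp (by lia))
  · exact mul_eq_zero_of_left (qPoch_zpow_of_nonpos hp (by lia)) _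

lemma gaussCoeff_succ (hp0 : p ≠ 0) (hp1 : ‖p‖ < 1) (n : ℕ) (k : ℤ) :
    (1 - p ^ (2 * n + 1)) * (1 - p ^ (2 * n + 2)) * gaussCoeff p (n + 1) k =
      (1 + p ^ (2 * n + 1)) * gaussCoeff p n k + p ^ (n + 1 - k) * gaussCoeff p n (k - 1) +
        p ^ (n + 1 + k) * gaussCoeff p n (k + 1) := by
  set u := p ^ ((n : ℤ) - k) with hu
  set v := p ^ ((n : ℤ) + k) with hv
  have hsucc : gaussCoeff p (n + 1) k = qPoch (u * p * p) p * qPoch (v * p * p) p := by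
    simp only [gaussCoeff, hu, hv, ← zpow_add_one₀ hp0]
    push_cast
    congr 3 <;> ring
  have hself : gaussCoeff p n k = qPoch (u * p) p * qPoch (v * p) p := by
    simp only [gaussCoeff, hu, hv, ← zpow_add_one₀ hp0]
    congr 3 <;> ring
  have hsub : gaussCoeff p n (k - 1) = qPoch (u * p * p) p * qPoch v p := by
    simp only [gaussCoeff, hu, hv, ← zpow_add_one₀ hp0]
    congr 3 <;> ring
  have hadd : gaussCoeff p n (k + 1) = qPoch u p * qPoch (v * p * p) p := by
    simp only [gaussCoeff, hu, hv, ← zpow_add_one₀ hp0]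
    congr 3 <;> ring
  have hpow : p ^ (2 * n) = u * v := by
    rw [hu, hv, ← zpow_add₀ hp0, ← zpow_natCast]
    congr 1
    push_cast
    ring
  have hpow_sub : p ^ (n + 1 - k) = u * p := by rw [hu, ← zpow_add_one₀ hp0, sub_add_eq_add_sub]
  have hpow_add : p ^ (n + 1 + k) = v * p := by rw [hv, ← zpow_add_one₀ hp0, add_right_comm]
  rw [hsucc, hself, hsub, hadd, hpow_sub, hpow_add, pow_add, pow_add, hpow,
    qPoch_eq_one_sub_mul u hp1, qPoch_eq_one_sub_mul (u * p) hp1,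
    qPoch_eq_one_sub_mul v hp1, qPoch_eq_one_sub_mul (v * p) hp1]
  ring

lemma norm_gaussCoeff_le (hp0 : p ≠ 0) (hp1 : ‖p‖ < 1) (n : ℕ) (k : ℤ) :
    ‖gaussCoeff p n k‖ ≤ Real.exp (1 / (1 - ‖p‖)) ^ 2 := by
  rw [gaussCoeff, norm_mul, sq]
  gcongr <;> exact norm_qPoch_zpow_le hp0 hp1 _

lemma tendsto_gaussCoeff (hp0 : p ≠ 0) (hp1 : ‖p‖ < 1) (k : ℤ) :
    Tendsto (fun n ↦ gaussCoeff p n k) atTop (𝓝 1) := by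
  have hfactor (j : ℤ) : Tendsto (fun n : ℕ ↦ qPoch (p ^ (n + j)) p) atTop (𝓝 1) := by
    refine (tendsto_qPoch_zero hp1).comp ?_
    simpa only [zpow_add₀ hp0, zpow_natCast, zero_mul] using
      (tendsto_pow_atTop_nhds_zero_of_norm_lt_one hp1).mul_const (p ^ j)
  simpa only [gaussCoeff, add_assoc, add_sub_assoc, one_mul] using
    (hfactor (1 - k)).mul (hfactor (1 + k))

end GaussianCoefficients

section JacobiTripleProduct

variable {r w : ℂ}

/-- The theta series `∑ r^(n²) wⁿ` over the integers, that is Mathlib's `jacobiTheta₂ z τ` with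
`r = exp (π i τ)` and `w = exp (2 π i z)`. -/
noncomputable def thetaSeries (r w : ℂ) : ℂ := ∑' n : ℤ, r ^ (n ^ 2) * w ^ n

lemma summable_thetaSeries (hr0 : r ≠ 0) (hr1 : ‖r‖ < 1) (hw : w ≠ 0) :
    Summable fun n : ℤ ↦ r ^ (n ^ 2) * w ^ n := by
  set τ := Function.Periodic.invQParam 2 r
  set z := Function.Periodic.invQParam 1 w
  have hτ : 0 < τ.im := Function.Periodic.im_invQParam_pos_of_norm_lt_one two_pos hr1 hr0
  have hr : Complex.exp (Real.pi * Complex.I * τ) = r := by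
    rw [← Function.Periodic.qParam_right_inv two_ne_zero hr0, Function.Periodic.qParam]
    congr 1
    push_cast
    ring
  have hw' : Complex.exp (2 * Real.pi * Complex.I * z) = w := by
    rw [← Function.Periodic.qParam_right_inv one_ne_zero hw, Function.Periodic.qParam]
    simp [z]
  refine ((summable_jacobiTheta₂_term_iff z τ).2 hτ).congr fun n ↦ ?_
  rw [← hr, ← hw', ← Complex.exp_int_mul, ← Complex.exp_int_mul, ← Complex.exp_add,
    jacobiTheta₂_term]
  congr 1
  push_cast
  ring

lemma thetaSeries_term_sub_one (hr : r ≠ 0) (hw : w ≠ 0) (n : ℕ) (k : ℤ) :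
    (r ^ 2) ^ (n + 1 - k) * (r ^ (k ^ 2) * w ^ k) =
      r ^ (2 * n + 1) * w * (r ^ ((k - 1) ^ 2) * w ^ (k - 1)) := by
  have hexp : r ^ (2 * (n + 1 - k)) * r ^ (k ^ 2) = r ^ (2 * n + 1) * r ^ ((k - 1) ^ 2) := by
    rw [← zpow_natCast, ← zpow_add₀ hr, ← zpow_add₀ hr]
    congr 1
    push_cast
    ring
  rw [sq_zpow, zpow_sub_one₀ hw, ← mul_assoc, hexp]
  field_simp

lemma thetaSeries_term_add_one (hr : r ≠ 0) (hw : w ≠ 0) (n : ℕ) (k : ℤ) :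
    (r ^ 2) ^ (n + 1 + k) * (r ^ (k ^ 2) * w ^ k) =
      r ^ (2 * n + 1) * w⁻¹ * (r ^ ((k + 1) ^ 2) * w ^ (k + 1)) := by
  have h := thetaSeries_term_sub_one hr (inv_ne_zero hw) n (-k)
  rwa [sub_neg_eq_add, neg_sq, inv_zpow', neg_neg, ← neg_add', neg_sq, inv_zpow', neg_neg] at h

lemma gaussCoeff_succ_mul_term (hr0 : r ≠ 0) (hr1 : ‖r ^ 2‖ < 1) (hw : w ≠ 0) (n : ℕ) (k : ℤ) :
    (1 - (r ^ 2) ^ (2 * n + 1)) * (1 - (r ^ 2) ^ (2 * n + 2)) *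
        (gaussCoeff (r ^ 2) (n + 1) k * (r ^ (k ^ 2) * w ^ k)) =
      (1 + (r ^ 2) ^ (2 * n + 1)) * (gaussCoeff (r ^ 2) n k * (r ^ (k ^ 2) * w ^ k)) +
        r ^ (2 * n + 1) * w *
          (gaussCoeff (r ^ 2) n (k - 1) * (r ^ ((k - 1) ^ 2) * w ^ (k - 1))) +
        r ^ (2 * n + 1) * w⁻¹ *
          (gaussCoeff (r ^ 2) n (k + 1) * (r ^ ((k + 1) ^ 2) * w ^ (k + 1))) := by
  linear_combination (r ^ (k ^ 2) * w ^ k) * gaussCoeff_succ (pow_ne_zero 2 hr0) hr1 n k +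
    gaussCoeff (r ^ 2) n (k - 1) * thetaSeries_term_sub_one hr0 hw n k +
    gaussCoeff (r ^ 2) n (k + 1) * thetaSeries_term_add_one hr0 hw n k

lemma hasSum_gaussCoeff_mul (hr0 : r ≠ 0) (hr1 : ‖r ^ 2‖ < 1) (hw : w ≠ 0) (n : ℕ) :
    HasSum (fun k : ℤ ↦ gaussCoeff (r ^ 2) n k * (r ^ (k ^ 2) * w ^ k))
      (qPoch (r ^ 2) (r ^ 2) * qPoch ((r ^ 2) ^ (2 * n + 1)) (r ^ 2) *
        ∏ j ∈ Finset.range n, ((1 + w * r ^ (2 * j + 1)) * (1 + w⁻¹ * r ^ (2 * j + 1)))) := by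
  induction n with
  | zero =>
    convert hasSum_single (0 : ℤ) fun k hk ↦ ?_ using 1
    · simp [gaussCoeff]
    · rw [gaussCoeff_zero_of_ne_zero (pow_ne_zero 2 hr0) hk, zero_mul]
  | succ n ih =>
    have hsub := ((Equiv.subRight (1 : ℤ)).hasSum_iff.2 ih).mul_left (r ^ (2 * n + 1) * w)
    have hadd := ((Equiv.addRight (1 : ℤ)).hasSum_iff.2 ih).mul_left (r ^ (2 * n + 1) * w⁻¹)
    have hsum := ((ih.mul_left (1 + (r ^ 2) ^ (2 * n + 1))).add hsub).add hadd
    simp only [Function.comp_apply, Equiv.subRight_apply, Equiv.coe_addRight,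
      ← gaussCoeff_succ_mul_term hr0 hr1 hw] at hsum
    have hfactor : (1 + w * r ^ (2 * n + 1)) * (1 + w⁻¹ * r ^ (2 * n + 1)) =
        1 + (r ^ 2) ^ (2 * n + 1) + r ^ (2 * n + 1) * w + r ^ (2 * n + 1) * w⁻¹ := by
      field_simp
      ring
    have htail : qPoch ((r ^ 2) ^ (2 * n + 1)) (r ^ 2) = (1 - (r ^ 2) ^ (2 * n + 1)) *
        (1 - (r ^ 2) ^ (2 * n + 2)) * qPoch ((r ^ 2) ^ (2 * (n + 1) + 1)) (r ^ 2) := by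
      rw [qPoch_eq_one_sub_mul _ hr1, ← pow_succ, qPoch_eq_one_sub_mul _ hr1, ← pow_succ, mul_assoc,
        Nat.mul_succ]
    have hne : (1 - (r ^ 2) ^ (2 * n + 1)) * (1 - (r ^ 2) ^ (2 * n + 2)) ≠ 0 :=
      mul_ne_zero (isUnit_one_sub_of_norm_lt_one (norm_pow_lt_one hr1 (Nat.succ_ne_zero _))).ne_zero
        (isUnit_one_sub_of_norm_lt_one (norm_pow_lt_one hr1 (Nat.succ_ne_zero _))).ne_zero
    refine (hasSum_mul_left_iff hne).1 ?_
    convert! hsum using 1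
    rw [Finset.prod_range_succ, hfactor, htail]
    ring

/-- The modified Jacobi theta function `θ(z; p) = (z; p)_∞ (p / z; p)_∞`, the product side of the
Jacobi triple product. It is meant for `z ≠ 0` only. -/
noncomputable def modTheta (z p : ℂ) : ℂ := qPoch z p * qPoch (p / z) p

theorem thetaSeries_eq_qPoch_mul_modTheta (hr0 : r ≠ 0) (hr1 : ‖r‖ < 1) (hw : w ≠ 0) :
    thetaSeries r w = qPoch (r ^ 2) (r ^ 2) * modTheta (-(w * r)) (r ^ 2) := by
  have hp0 : r ^ 2 ≠ 0 := pow_ne_zero 2 hr0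
  have hp1 : ‖r ^ 2‖ < 1 := norm_pow_lt_one hr1 two_ne_zero
  have hseries : Tendsto
      (fun n ↦ ∑' k : ℤ, gaussCoeff (r ^ 2) n k * (r ^ (k ^ 2) * w ^ k)) atTop
      (𝓝 (thetaSeries r w)) := by
    refine tendsto_tsum_of_dominated_convergence
      ((summable_thetaSeries hr0 hr1 hw).norm.mul_left (Real.exp (1 / (1 - ‖r ^ 2‖)) ^ 2))
      (fun k ↦ ?_) (Eventually.of_forall fun n k ↦ ?_)
    · simpa only [one_mul] using (tendsto_gaussCoeff hp0 hp1 k).mul_const (r ^ (k ^ 2) * w ^ k)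
    · rw [norm_mul]
      gcongr
      exact norm_gaussCoeff_le hp0 hp1 n k
  have htail : Tendsto (fun n : ℕ ↦ qPoch ((r ^ 2) ^ (2 * n + 1)) (r ^ 2)) atTop (𝓝 1) := by
    have hexp : Tendsto (fun n : ℕ ↦ 2 * n + 1) atTop atTop :=
      tendsto_atTop_mono (fun n ↦ by simp only [id]; lia) tendsto_id
    exact (tendsto_qPoch_zero hp1).comp ((tendsto_pow_atTop_nhds_zero_of_norm_lt_one hp1).comp hexp)
  have hprod : Tendsto (fun n ↦ ∏ j ∈ Finset.range n,
      ((1 + w * r ^ (2 * j + 1)) * (1 + w⁻¹ * r ^ (2 * j + 1)))) atTop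
      (𝓝 (modTheta (-(w * r)) (r ^ 2))) := by
    refine ((tendsto_prod_range_qPoch (-(w * r)) hp1).mul
      (tendsto_prod_range_qPoch (r ^ 2 / -(w * r)) hp1)).congr fun n ↦ ?_
    rw [← Finset.prod_mul_distrib]
    refine Finset.prod_congr rfl fun j _ ↦ ?_
    field_simp
    ring
  refine tendsto_nhds_unique hseries ?_
  simp only [(hasSum_gaussCoeff_mul hr0 hp1 hw _).tsum_eq]
  simpa only [mul_one] using (htail.const_mul (qPoch (r ^ 2) (r ^ 2))).mul hprod

end JacobiTripleProduct

section ThetaIdentities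

variable {r p : ℂ}

lemma thetaSeries_mul_left (hr : r ≠ 0) {w : ℂ} (hw : w ≠ 0) :
    thetaSeries r (r * w) = thetaSeries r (w / r) / w := by
  rw [thetaSeries, thetaSeries, ← tsum_div_const,
    ← (Equiv.addRight (1 : ℤ)).tsum_eq fun n : ℤ ↦ _ / w]
  refine tsum_congr fun n ↦ ?_
  have hexp : r ^ ((n + 1) ^ 2) = r ^ (n ^ 2) * r ^ n * r ^ n * r := by
    rw [← zpow_add₀ hr, ← zpow_add₀ hr, ← zpow_add_one₀ hr]
    congr 1
    ring
  rw [Equiv.coe_addRight, hexp, mul_zpow, div_zpow, zpow_add_one₀ hw, zpow_add_one₀ hr]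
  field_simp

lemma hasSum_add_of_sum_sub_parity {α : Type*} [AddCommMonoid α] [TopologicalSpace α]
    [ContinuousAdd α] {f : ℤ × ℤ → α} {a b : α}
    (heven : HasSum (fun z : ℤ × ℤ ↦ f (z.1 + z.2, z.1 - z.2)) a)
    (hodd : HasSum (fun z : ℤ × ℤ ↦ f (z.1 + z.2 + 1, z.1 - z.2)) b) : HasSum f (a + b) := by
  have heven_inj : Function.Injective fun z : ℤ × ℤ ↦ (z.1 + z.2, z.1 - z.2) := fun y z h ↦ by
    rw [Prod.mk.injEq] at h
    ext <;> lia
  have hodd_inj : Function.Injective fun z : ℤ × ℤ ↦ (z.1 + z.2 + 1, z.1 - z.2) := fun y z h ↦ by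
    rw [Prod.mk.injEq] at h
    ext <;> lia
  refine (heven_inj.hasSum_range_iff.2 heven).add_isCompl ?_ (hodd_inj.hasSum_range_iff.2 hodd)
  refine isCompl_iff.2 ⟨Set.disjoint_left.2 ?_, codisjoint_iff.2 (Set.eq_univ_of_forall ?_)⟩
  · rintro _ ⟨y, rfl⟩ ⟨z, h⟩
    rw [Prod.mk.injEq] at h
    lia
  · rintro ⟨m, n⟩
    obtain ⟨k, hk | hk⟩ := Int.even_or_odd' (m + n)
    · exact Or.inl ⟨(k, m - k), Prod.ext (by lia) (by lia)⟩
    · exact Or.inr ⟨(k, m - k - 1), Prod.ext (by lia) (by lia)⟩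

lemma hasSum_thetaSeries_mul (hr0 : r ≠ 0) (hr1 : ‖r‖ < 1) {u v : ℂ} (hu : u ≠ 0) (hv : v ≠ 0) :
    HasSum (fun z : ℤ × ℤ ↦ (r ^ (z.1 ^ 2) * u ^ z.1) * (r ^ (z.2 ^ 2) * v ^ z.2))
      (thetaSeries r u * thetaSeries r v) := by
  have hsu := (summable_thetaSeries hr0 hr1 hu).norm
  have hsv := (summable_thetaSeries hr0 hr1 hv).norm
  rw [thetaSeries, thetaSeries, tsum_mul_tsum_of_summable_norm hsu hsv]
  exact (summable_mul_of_summable_norm hsu hsv).hasSum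

lemma thetaSeries_mul_term_even (hr : r ≠ 0) {u v : ℂ} (hu : u ≠ 0) (hv : v ≠ 0) (k l : ℤ) :
    (r ^ ((k + l) ^ 2) * u ^ (k + l)) * (r ^ ((k - l) ^ 2) * v ^ (k - l)) =
      ((r ^ 2) ^ (k ^ 2) * (u * v) ^ k) * ((r ^ 2) ^ (l ^ 2) * (u / v) ^ l) := by
  have hexp : r ^ ((k + l) ^ 2) * r ^ ((k - l) ^ 2) = r ^ (2 * k ^ 2) * r ^ (2 * l ^ 2) := by
    rw [← zpow_add₀ hr, ← zpow_add₀ hr]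
    congr 1
    ring
  rw [sq_zpow, sq_zpow, mul_zpow, div_zpow, zpow_add₀ hu, zpow_sub₀ hv]
  linear_combination (u ^ k * u ^ l * (v ^ k / v ^ l)) * hexp

lemma thetaSeries_mul_term_odd (hr : r ≠ 0) {u v : ℂ} (hu : u ≠ 0) (hv : v ≠ 0) (k l : ℤ) :
    (r ^ ((k + l + 1) ^ 2) * u ^ (k + l + 1)) * (r ^ ((k - l) ^ 2) * v ^ (k - l)) =
      r * u * (((r ^ 2) ^ (k ^ 2) * (r ^ 2 * (u * v)) ^ k) *
        ((r ^ 2) ^ (l ^ 2) * (r ^ 2 * (u / v)) ^ l)) := by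
  have hexp : r ^ ((k + l + 1) ^ 2) = r ^ ((k + l) ^ 2) * (r ^ (2 * k) * r ^ (2 * l) * r) := by
    rw [← zpow_add₀ hr, ← zpow_add_one₀ hr, ← zpow_add₀ hr]
    congr 1
    ring
  rw [mul_zpow (r ^ 2), mul_zpow (r ^ 2), sq_zpow r k, sq_zpow r l, hexp, zpow_add_one₀ hu]
  linear_combination (r ^ (2 * k) * r ^ (2 * l) * r * u) * thetaSeries_mul_term_even hr hu hv k l

lemma thetaSeries_mul_thetaSeries (hr0 : r ≠ 0) (hr1 : ‖r‖ < 1) {u v : ℂ} (hu : u ≠ 0)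
    (hv : v ≠ 0) :
    thetaSeries r u * thetaSeries r v =
      thetaSeries (r ^ 2) (u * v) * thetaSeries (r ^ 2) (u / v) +
        r * u * (thetaSeries (r ^ 2) (r ^ 2 * (u * v)) *
          thetaSeries (r ^ 2) (r ^ 2 * (u / v))) := by
  have hp0 : r ^ 2 ≠ 0 := pow_ne_zero 2 hr0
  have hp1 : ‖r ^ 2‖ < 1 := norm_pow_lt_one hr1 two_ne_zero
  have heven := hasSum_thetaSeries_mul hp0 hp1 (mul_ne_zero hu hv) (div_ne_zero hu hv)
  have hodd := (hasSum_thetaSeries_mul hp0 hp1 (mul_ne_zero hp0 (mul_ne_zero hu hv))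
    (mul_ne_zero hp0 (div_ne_zero hu hv))).mul_left (r * u)
  simp only [← thetaSeries_mul_term_even hr0 hu hv] at heven
  simp only [← thetaSeries_mul_term_odd hr0 hu hv] at hodd
  exact (hasSum_thetaSeries_mul hr0 hr1 hu hv).unique (hasSum_add_of_sum_sub_parity
    (f := fun z : ℤ × ℤ ↦ (r ^ (z.1 ^ 2) * u ^ z.1) * (r ^ (z.2 ^ 2) * v ^ z.2)) heven hodd)

lemma modTheta_mul_modTheta_div (hr0 : r ≠ 0) (hr1 : ‖r‖ < 1) {a b : ℂ} (ha : a ≠ 0) (hb : b ≠ 0) :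
    qPoch (r ^ 2) (r ^ 2) ^ 2 * (modTheta (a * b) (r ^ 2) * modTheta (a / b) (r ^ 2)) =
      thetaSeries (r ^ 2) (a ^ 2 / r ^ 2) * thetaSeries (r ^ 2) (b ^ 2) -
        a / b * (thetaSeries (r ^ 2) (a ^ 2) * thetaSeries (r ^ 2) (b ^ 2 / r ^ 2)) := by
  have hseries {z : ℂ} (hz : z ≠ 0) :
      qPoch (r ^ 2) (r ^ 2) * modTheta z (r ^ 2) = thetaSeries r (-z / r) := by
    rw [thetaSeries_eq_qPoch_mul_modTheta hr0 hr1 (div_ne_zero (neg_ne_zero.2 hz) hr0),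
      div_mul_cancel₀ _ hr0, neg_neg]
  have hab : a * b ≠ 0 := mul_ne_zero ha hb
  have hdiv : a / b ≠ 0 := div_ne_zero ha hb
  have hu : -(a * b) / r ≠ 0 := div_ne_zero (neg_ne_zero.2 hab) hr0
  have hv : -(a / b) / r ≠ 0 := div_ne_zero (neg_ne_zero.2 hdiv) hr0
  have hmul : -(a * b) / r * (-(a / b) / r) = a ^ 2 / r ^ 2 := by field_simp
  have hquot : -(a * b) / r / (-(a / b) / r) = b ^ 2 := by field_simp
  calc _ = thetaSeries r (-(a * b) / r) * thetaSeries r (-(a / b) / r) := by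
        rw [← hseries hab, ← hseries hdiv]
        ring
    _ = _ := by
        rw [thetaSeries_mul_thetaSeries hr0 hr1 hu hv, hmul, hquot,
          mul_div_cancel₀ _ (pow_ne_zero 2 hr0),
          thetaSeries_mul_left (pow_ne_zero 2 hr0) (pow_ne_zero 2 hb)]
        field_simp
        ring

theorem modTheta_weierstrass (hp0 : p ≠ 0) (hp1 : ‖p‖ < 1) {a b c d : ℂ} (ha : a ≠ 0) (hb : b ≠ 0)
    (hc : c ≠ 0) (hd : d ≠ 0) :
    modTheta (a * b) p * modTheta (a / b) p * (modTheta (c * d) p * modTheta (c / d) p) =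
      modTheta (a * d) p * modTheta (a / d) p * (modTheta (c * b) p * modTheta (c / b) p) +
        c / b * (modTheta (b * d) p * modTheta (b / d) p *
          (modTheta (a * c) p * modTheta (a / c) p)) := by
  obtain ⟨r, rfl⟩ : ∃ r : ℂ, r ^ 2 = p := IsAlgClosed.exists_pow_nat_eq p two_pos
  have hr0 : r ≠ 0 := by
    rintro rfl
    exact hp0 (zero_pow two_ne_zero)
  have hr1 : ‖r‖ < 1 := by
    rwa [norm_pow, pow_lt_one_iff_of_nonneg (norm_nonneg r) two_ne_zero] at hp1
  have hpoch : qPoch (r ^ 2) (r ^ 2) ^ 2 ≠ 0 := pow_ne_zero 2 (qPoch_ne_zero hp1 hp1)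
  have hdet {s t : ℂ} (hs : s ≠ 0) (ht : t ≠ 0) := eq_div_of_mul_eq hpoch
    ((mul_comm _ _).trans (modTheta_mul_modTheta_div hr0 hr1 hs ht))
  rw [hdet ha hb, hdet hc hd, hdet ha hd, hdet hc hb, hdet hb hd, hdet ha hc]
  field_simp
  ring

end ThetaIdentities

section TwoDissection

variable {q : ℂ}

lemma qPoch_pow_eq_prod {j m : ℕ} (hj : j ≠ 0) (hm : m ≠ 0) (hq : ‖q‖ < 1) (k : ℕ) :
    qPoch (q ^ k) (q ^ j) = ∏ i ∈ Finset.range m, qPoch (q ^ (k + j * i)) (q ^ (j * m)) := by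
  simp only [qPoch_eq_prod_qPoch_pow hm (q ^ k) (norm_pow_lt_one hq hj), pow_add, pow_mul]

lemma modTheta_pow (hq : q ≠ 0) (m n : ℕ) :
    modTheta (q ^ m) (q ^ (m + n)) = qPoch (q ^ m) (q ^ (m + n)) * qPoch (q ^ n) (q ^ (m + n)) := by
  rw [modTheta, pow_add, mul_div_cancel_left₀ _ (pow_ne_zero m hq)]

lemma modTheta_pow_comm (hq : q ≠ 0) (m n : ℕ) :
    modTheta (q ^ m) (q ^ (m + n)) = modTheta (q ^ n) (q ^ (m + n)) := by
  rw [modTheta_pow hq, add_comm m n, modTheta_pow hq, mul_comm]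

lemma qPoch_sq_eq_modTheta (hq0 : q ≠ 0) (hq1 : ‖q‖ < 1) :
    qPoch q (q ^ 2) =
      modTheta q (q ^ 12) * modTheta (q ^ 3) (q ^ 12) * modTheta (q ^ 5) (q ^ 12) := by
  have hprod := qPoch_pow_eq_prod two_ne_zero (m := 6) (by norm_num) hq1 1
  have hθ := modTheta_pow hq0 1 11
  simp only [Finset.prod_range_succ, Finset.prod_range_zero, pow_one, Nat.reduceAdd,
    Nat.reduceMul] at hprod hθ
  rw [hprod, hθ, modTheta_pow hq0 3 9, modTheta_pow hq0 5 7]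
  ring

lemma qPoch_cube_eq_modTheta (hq0 : q ≠ 0) (hq1 : ‖q‖ < 1) :
    qPoch (q ^ 3) (q ^ 6) = modTheta (q ^ 3) (q ^ 12) := by
  have hprod := qPoch_pow_eq_prod (j := 6) (by norm_num) two_ne_zero hq1 3
  simp only [Finset.prod_range_succ, Finset.prod_range_zero, Nat.reduceAdd, Nat.reduceMul] at hprod
  rw [hprod, modTheta_pow hq0 3 9, one_mul]

lemma qPoch_two_eq_modTheta (hq0 : q ≠ 0) (hq1 : ‖q‖ < 1) :
    qPoch (q ^ 2) (q ^ 2) =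
      modTheta (q ^ 2) (q ^ 12) * modTheta (q ^ 4) (q ^ 12) * qPoch (q ^ 6) (q ^ 6) := by
  have hprod₂ := qPoch_pow_eq_prod two_ne_zero (m := 6) (by norm_num) hq1 2
  have hprod₆ := qPoch_pow_eq_prod (j := 6) (by norm_num) two_ne_zero hq1 6
  simp only [Finset.prod_range_succ, Finset.prod_range_zero, Nat.reduceAdd, Nat.reduceMul]
    at hprod₂ hprod₆
  rw [hprod₂, hprod₆, modTheta_pow hq0 2 10, modTheta_pow hq0 4 8]
  ring

lemma qPoch_four_eq_modTheta (hq0 : q ≠ 0) (hq1 : ‖q‖ < 1) :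
    qPoch (q ^ 4) (q ^ 4) = modTheta (q ^ 4) (q ^ 12) * qPoch (q ^ 12) (q ^ 12) := by
  have hprod := qPoch_pow_eq_prod (j := 4) (by norm_num) three_ne_zero hq1 4
  simp only [Finset.prod_range_succ, Finset.prod_range_zero, Nat.reduceAdd, Nat.reduceMul] at hprod
  rw [hprod, modTheta_pow hq0 4 8, one_mul]

lemma modTheta_six_mul_qPoch_sq (hq0 : q ≠ 0) (hq1 : ‖q‖ < 1) :
    modTheta (q ^ 6) (q ^ 12) * qPoch (q ^ 12) (q ^ 12) ^ 2 = qPoch (q ^ 6) (q ^ 6) ^ 2 := by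
  have hprod := qPoch_pow_eq_prod (j := 6) (by norm_num) two_ne_zero hq1 6
  simp only [Finset.prod_range_succ, Finset.prod_range_zero, Nat.reduceAdd, Nat.reduceMul] at hprod
  rw [hprod, modTheta_pow hq0 6 6]
  ring

lemma modTheta_weierstrass_twelve (hq0 : q ≠ 0) (hq1 : ‖q‖ < 1) :
    modTheta (q ^ 2) (q ^ 12) * modTheta (q ^ 6) (q ^ 12) * modTheta (q ^ 3) (q ^ 12) ^ 2 =
      modTheta q (q ^ 12) * modTheta (q ^ 5) (q ^ 12) *
        (modTheta (q ^ 4) (q ^ 12) ^ 2 + q * modTheta (q ^ 2) (q ^ 12) ^ 2) := by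
  have h := modTheta_weierstrass (pow_ne_zero 12 hq0) (norm_pow_lt_one hq1 (by norm_num))
    (pow_ne_zero 4 hq0) (pow_ne_zero 2 hq0) (pow_ne_zero 3 hq0) one_ne_zero
  have hdiv₄₂ : q ^ 4 / q ^ 2 = q ^ 2 := by field_simp
  have hdiv₃₂ : q ^ 3 / q ^ 2 = q := by field_simp
  have hdiv₄₃ : q ^ 4 / q ^ 3 = q := by field_simp
  have hcomm := modTheta_pow_comm hq0 7 5
  simp only [← pow_add, mul_one, div_one, hdiv₄₂, hdiv₃₂, hdiv₄₃, Nat.reduceAdd] at h hcomm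
  rw [hcomm] at h
  linear_combination h

theorem one_div_x_two_dissection (hq : ‖q‖ < 1) :
    1 / x q =
      qPoch (q ^ 4) (q ^ 4) ^ 3 /
          (qPoch (q ^ 2) (q ^ 2) * qPoch (q ^ 6) (q ^ 6) * qPoch (q ^ 12) (q ^ 12)) +
        q * (qPoch (q ^ 2) (q ^ 2) * qPoch (q ^ 12) (q ^ 12) ^ 3 /
          (qPoch (q ^ 4) (q ^ 4) * qPoch (q ^ 6) (q ^ 6) ^ 3)) := by
  rcases eq_or_ne q 0 with rfl | hq0
  · simp [x, qPoch]
  have h₁ : qPoch q (q ^ 2) ≠ 0 := qPoch_ne_zero hq (norm_pow_lt_one hq two_ne_zero)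
  have h₂ := qPoch_pow_self_ne_zero hq two_ne_zero
  have h₆ : qPoch (q ^ 6) (q ^ 6) ≠ 0 := qPoch_pow_self_ne_zero hq (by norm_num)
  have h₁₂ : qPoch (q ^ 12) (q ^ 12) ≠ 0 := qPoch_pow_self_ne_zero hq (by norm_num)
  have hθ₆ := modTheta_six_mul_qPoch_sq hq0 hq
  have hw := modTheta_weierstrass_twelve hq0 hq
  rw [qPoch_sq_eq_modTheta hq0 hq] at h₁
  rw [qPoch_two_eq_modTheta hq0 hq] at h₂
  rw [x, qPoch_sq_eq_modTheta hq0 hq, qPoch_cube_eq_modTheta hq0 hq, qPoch_two_eq_modTheta hq0 hq,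
    qPoch_four_eq_modTheta hq0 hq]
  simp only [mul_ne_zero_iff] at h₁ h₂
  obtain ⟨⟨hθ₁, -⟩, hθ₅⟩ := h₁
  obtain ⟨⟨hθ₂, hθ₄⟩, -⟩ := h₂
  field_simp
  linear_combination qPoch (q ^ 12) (q ^ 12) ^ 2 * hw -
    modTheta (q ^ 2) (q ^ 12) * modTheta (q ^ 3) (q ^ 12) ^ 2 * hθ₆

end TwoDissection

theorem one_div_x_sq_two_dissection (q : ℂ) (hq : ‖q‖ < 1) :
    1 / x q ^ 2 =
      (q ^ 2 * qPoch (q ^ 2) (q ^ 2) ^ 2 * qPoch (q ^ 12) (q ^ 12) ^ 6 /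
          (qPoch (q ^ 4) (q ^ 4) ^ 2 * qPoch (q ^ 6) (q ^ 6) ^ 6) +
        qPoch (q ^ 4) (q ^ 4) ^ 6 /
          (qPoch (q ^ 2) (q ^ 2) ^ 2 * qPoch (q ^ 6) (q ^ 6) ^ 2 *
            qPoch (q ^ 12) (q ^ 12) ^ 2)) +
      2 * q * qPoch (q ^ 4) (q ^ 4) ^ 2 * qPoch (q ^ 12) (q ^ 12) ^ 2 /
        qPoch (q ^ 6) (q ^ 6) ^ 4 := by
  have h₂ : qPoch (q ^ 2) (q ^ 2) ≠ 0 := qPoch_pow_self_ne_zero hq two_ne_zero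
  have h₄ : qPoch (q ^ 4) (q ^ 4) ≠ 0 := qPoch_pow_self_ne_zero hq four_ne_zero
  have h₆ : qPoch (q ^ 6) (q ^ 6) ≠ 0 := qPoch_pow_self_ne_zero hq (by norm_num)
  have h₁₂ : qPoch (q ^ 12) (q ^ 12) ≠ 0 := qPoch_pow_self_ne_zero hq (by norm_num)
  rw [← one_div_pow, one_div_x_two_dissection hq]
  field_simp
  ring
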